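/- arXiv:2404.01351 — 6 statements merged into one kernel-verified Lean document; each statement's English description precedes it below -/
import Mathlib

section
/- (Theorem 1, Disagreement Equality.) Suppose confidence–prediction calibration holds. Then for every N ≥ 1, the expected test error equals the expected prediction disagreement with dropouts: ∫_Θ Err(θ) dμ(θ) = ∫_{Θ^{N+1}} PDD_N(θ₀, θ₁, …, θ_N) d(μ^{⊗(N+1)})(θ₀, …, θ_N). -/
open MeasureTheory

open ProbabilityTheory in
lemma aux_pair {Θ : Type*} [MeasurableSpace Θ] (μ : Measure Θ) [IsProbabilityMeasure μ] {n : ℕ}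
    (i j : Fin n) (hij : i ≠ j) (f : Θ → ℝ) (hf : Measurable f) :
    ∫ t, f (t i) * f (t j) ∂(Measure.pi fun _ : Fin n => μ) = (∫ x, f x ∂μ) * ∫ x, f x ∂μ := by
  have h1 : iIndepFun (fun (i : Fin n) (t : Fin n → Θ) => f (t i)) (Measure.pi fun _ => μ) :=
    iIndepFun_pi (X := fun _ => f) (fun _ => hf.aemeasurable)
  have h2 := h1.indepFun hij
  have m : ∀ i : Fin n, Measurable (fun t : Fin n → Θ => f (t i)) :=
    fun i => hf.comp (measurable_pi_apply i)
  rw [h2.integral_fun_mul_eq_mul_integral (m i).aestronglyMeasurable (m j).aestronglyMeasurable]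
  rw [integral_comp_eval (μ := fun _ : Fin n => μ) hf.aestronglyMeasurable,
    integral_comp_eval (μ := fun _ : Fin n => μ) hf.aestronglyMeasurable]

lemma aux_ind_meas {T : Type*} [MeasurableSpace T] {K : ℕ} (u : T → Fin K) (hu : Measurable u)
    (k : Fin K) : Measurable (fun t => if u t = k then (1 : ℝ) else 0) :=
  Measurable.ite (hu (measurableSet_singleton k)) measurable_const measurable_const

lemma aux_ne_meas {T : Type*} [MeasurableSpace T] {K : ℕ} (u v : T → Fin K)
    (hu : Measurable u) (hv : Measurable v) :
    Measurable (fun t => if u t = v t then (0 : ℝ) else 1) :=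
  Measurable.ite (measurableSet_eq_fun hu hv) measurable_const measurable_const

lemma aux_ne_int {T : Type*} [MeasurableSpace T] {K : ℕ} (τ : Measure T) [IsFiniteMeasure τ]
    (u v : T → Fin K) (hu : Measurable u) (hv : Measurable v) :
    Integrable (fun t => if u t = v t then (0 : ℝ) else 1) τ := by
  refine Integrable.of_bound (aux_ne_meas u v hu hv).aestronglyMeasurable 1
    (ae_of_all _ fun t => ?_)
  split_ifs <;> simp

lemma aux_mul_int {T : Type*} [MeasurableSpace T] {K : ℕ} (τ : Measure T) [IsFiniteMeasure τ]
    (u v : T → Fin K) (hu : Measurable u) (hv : Measurable v) (k : Fin K) :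
    Integrable (fun t => (if u t = k then (1 : ℝ) else 0) * (if v t = k then (1 : ℝ) else 0)) τ := by
  refine Integrable.of_bound
    ((aux_ind_meas u hu k).mul (aux_ind_meas v hv k)).aestronglyMeasurable 1
    (ae_of_all _ fun t => ?_)
  split_ifs <;> simp

lemma aux_swap {T Ω : Type*} [MeasurableSpace T] [MeasurableSpace Ω] {K : ℕ}
    (τ : Measure T) (ν : Measure Ω) [IsProbabilityMeasure τ] [IsProbabilityMeasure ν]
    (u v : T × Ω → Fin K) (hu : Measurable u) (hv : Measurable v) :
    ∫ t, ∫ ω, (if u (t, ω) = v (t, ω) then (0 : ℝ) else 1) ∂ν ∂τ =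
      1 - ∑ k, ∫ ω, ∫ t, (if u (t, ω) = k then (1 : ℝ) else 0) *
        (if v (t, ω) = k then (1 : ℝ) else 0) ∂τ ∂ν := by
  rw [integral_integral (f := fun t ω => if u (t, ω) = v (t, ω) then (0 : ℝ) else 1)
    (aux_ne_int (τ.prod ν) u v hu hv)]
  have h1 : ∀ k, ∫ ω, ∫ t, (if u (t, ω) = k then (1 : ℝ) else 0) *
        (if v (t, ω) = k then (1 : ℝ) else 0) ∂τ ∂ν = ∫ z, (if u z = k then (1 : ℝ) else 0) *
        (if v z = k then (1 : ℝ) else 0) ∂(τ.prod ν) := fun k =>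
    (integral_prod_symm _ (aux_mul_int (τ.prod ν) u v hu hv k)).symm
  simp_rw [h1]
  rw [← integral_finsetSum _ (fun k _ => aux_mul_int (τ.prod ν) u v hu hv k)]
  have h2 : (1 : ℝ) = ∫ z, (1 : ℝ) ∂(τ.prod ν) := by simp
  conv_rhs => lhs; rw [h2]
  rw [← integral_sub (integrable_const _)
    (integrable_finsetSum _ (fun k _ => aux_mul_int (τ.prod ν) u v hu hv k))]
  congr 1
  ext z
  by_cases hz : u z = v z <;> simp [hz, eq_comm]

/-- Theorem 1 (Disagreement Equality): under confidence–prediction calibration,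
the expected test error equals the expected prediction disagreement with dropouts. -/
theorem disagreement_equality
    {Θ Ω 𝒳 : Type*} [MeasurableSpace Θ] [MeasurableSpace Ω] [MeasurableSpace 𝒳]
    (μ : Measure Θ) (ν : Measure Ω)
    [IsProbabilityMeasure μ] [IsProbabilityMeasure ν]
    (K : ℕ) (hK : 1 ≤ K)
    (h : Θ × 𝒳 → Fin K) (hmeas : Measurable h)
    (X : Ω → 𝒳) (hX : Measurable X)
    (Y : Ω → Fin K) (hY : Measurable Y)
    (htilde : Fin K → 𝒳 → ℝ)
    (htilde_def : ∀ k x, htilde k x = (μ {θ | h (θ, x) = k}).toReal)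
    (Err : Θ → ℝ)
    (Err_def : ∀ θ, Err θ = (ν {ω | h (θ, X ω) ≠ Y ω}).toReal)
    (calib : ∀ k : Fin K,
      ν[(fun ω => if Y ω = k then (1 : ℝ) else 0) |
          MeasurableSpace.comap (fun ω => htilde k (X ω)) Real.measurableSpace]
        =ᵐ[ν] fun ω => htilde k (X ω))
    (N : ℕ) (hN : 1 ≤ N)
    (PDD : (Fin (N + 1) → Θ) → ℝ)
    (PDD_def : ∀ θs : Fin (N + 1) → Θ,
      PDD θs = ∫ ω, (1 / (N : ℝ)) *
        ∑ i : Fin N, (if h (θs 0, X ω) = h (θs i.succ, X ω) then (0 : ℝ) else 1) ∂ν) :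
    ∫ θ, Err θ ∂μ = ∫ θs, PDD θs ∂(Measure.pi fun _ : Fin (N + 1) => μ) := by
  have hg : ∀ k x, ∫ θ, (if h (θ, x) = k then (1 : ℝ) else 0) ∂μ = htilde k x := by
    intro k x
    have hm : MeasurableSet {θ | h (θ, x) = k} :=
      (hmeas.comp measurable_prodMk_right) (measurableSet_singleton k)
    rw [htilde_def]
    have := integral_indicator_one (μ := μ) hm
    rw [← Measure.real, ← this]
    congr 1
    ext θ
    simp [Set.indicator_apply]
  have hgm : ∀ k, Measurable (htilde k) := by
    intro k
    have : htilde k = fun x => (μ {θ | h (θ, x) = k}).toReal := funext (htilde_def k)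
    rw [this]
    exact (measurable_measure_prodMk_right
      (hmeas (measurableSet_singleton k))).ennreal_toReal
  have hg1 : ∀ k x, ‖htilde k x‖ ≤ 1 := by
    intro k x
    rw [htilde_def, Real.norm_of_nonneg ENNReal.toReal_nonneg]
    exact measureReal_le_one
  have hYi : ∀ k, Integrable (fun ω => if Y ω = k then (1 : ℝ) else 0) ν := by
    intro k
    refine Integrable.of_bound (aux_ind_meas Y hY k).aestronglyMeasurable 1
      (ae_of_all _ fun t => ?_)
    split_ifs <;> simp
  have hcal : ∀ k, ∫ ω, htilde k (X ω) * (if Y ω = k then (1 : ℝ) else 0) ∂ν =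
      ∫ ω, htilde k (X ω) * htilde k (X ω) ∂ν := by
    intro k
    have hle : MeasurableSpace.comap (fun ω => htilde k (X ω)) Real.measurableSpace ≤ _ :=
      ((hgm k).comp hX).comap_le
    have hsm : StronglyMeasurable[MeasurableSpace.comap (fun ω => htilde k (X ω))
        Real.measurableSpace] (fun ω => htilde k (X ω)) :=
      (comap_measurable (fun ω => htilde k (X ω))).stronglyMeasurable
    have h1 := condExp_stronglyMeasurable_mul_of_bound hle hsm (hYi k) 1
      (ae_of_all _ fun ω => hg1 k (X ω))
    have h2 := integral_condExp (μ := ν) hle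
      (f := (fun ω => htilde k (X ω)) * (fun ω => if Y ω = k then (1 : ℝ) else 0))
    refine h2.symm.trans (integral_congr_ae ?_)
    filter_upwards [h1, calib k] with ω a b
    rw [a, Pi.mul_apply, b]
  have hL : ∫ θ, Err θ ∂μ = 1 - ∑ k, ∫ ω, htilde k (X ω) * htilde k (X ω) ∂ν := by
    have hu : Measurable (fun z : Θ × Ω => h (z.1, X z.2)) :=
      hmeas.comp (measurable_fst.prodMk (hX.comp measurable_snd))
    have hv : Measurable (fun z : Θ × Ω => Y z.2) := hY.comp measurable_snd
    have hE : ∀ θ, Err θ = ∫ ω, (if h (θ, X ω) = Y ω then (0 : ℝ) else 1) ∂ν := by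
      intro θ
      have hm : MeasurableSet {ω | h (θ, X ω) ≠ Y ω} :=
        (measurableSet_eq_fun (hu.comp measurable_prodMk_left) hY).compl
      have := integral_indicator_one (μ := ν) hm
      rw [Err_def, ← Measure.real, ← this]
      congr 1
      ext ω
      simp [Set.indicator_apply]
    simp_rw [hE]
    rw [aux_swap μ ν _ _ hu hv]
    congr 1
    refine Finset.sum_congr rfl fun k _ => ?_
    rw [← hcal k]
    congr 1
    ext ω
    rw [← hg k (X ω)]
    exact integral_mul_const (if Y ω = k then (1 : ℝ) else 0) (fun θ => if h (θ, X ω) = k then (1 : ℝ) else 0)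
  have hR : ∀ i : Fin N, ∫ θs : Fin (N + 1) → Θ,
      ∫ ω, (if h (θs 0, X ω) = h (θs i.succ, X ω) then (0 : ℝ) else 1) ∂ν
        ∂(Measure.pi fun _ : Fin (N + 1) => μ) =
      1 - ∑ k, ∫ ω, htilde k (X ω) * htilde k (X ω) ∂ν := by
    intro i
    have hu : ∀ j : Fin (N + 1),
        Measurable (fun z : (Fin (N + 1) → Θ) × Ω => h (z.1 j, X z.2)) := fun j =>
      hmeas.comp (((measurable_pi_apply j).comp measurable_fst).prodMk (hX.comp measurable_snd))
    rw [aux_swap (Measure.pi fun _ : Fin (N + 1) => μ) ν _ _ (hu 0) (hu i.succ)]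
    congr 1
    refine Finset.sum_congr rfl fun k _ => ?_
    congr 1
    ext ω
    rw [← hg k (X ω)]
    exact aux_pair μ 0 i.succ (Fin.succ_ne_zero i).symm
      (fun θ => if h (θ, X ω) = k then (1 : ℝ) else 0)
      (aux_ind_meas _ (hmeas.comp measurable_prodMk_right) k)
  have hP : ∀ θs, PDD θs = (1 / (N : ℝ)) * ∑ i : Fin N,
      ∫ ω, (if h (θs 0, X ω) = h (θs i.succ, X ω) then (0 : ℝ) else 1) ∂ν := by
    intro θs
    have hu : ∀ j, Measurable (fun ω => h (θs j, X ω)) := fun j =>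
      hmeas.comp (measurable_const.prodMk hX)
    rw [PDD_def, integral_const_mul, integral_finsetSum]
    exact fun i _ => aux_ne_int ν _ _ (hu 0) (hu i.succ)
  simp_rw [hP]
  rw [integral_const_mul, integral_finsetSum, Finset.sum_congr rfl (fun i _ => hR i), hL]
  · have : (N : ℝ) ≠ 0 := by positivity
    simp only [Finset.sum_const, Finset.card_univ, Fintype.card_fin, nsmul_eq_mul]
    field_simp
  · intro i _
    have hu : ∀ j : Fin (N + 1),
        Measurable (fun z : (Fin (N + 1) → Θ) × Ω => h (z.1 j, X z.2)) := fun j =>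
      hmeas.comp (((measurable_pi_apply j).comp measurable_fst).prodMk (hX.comp measurable_snd))
    exact (aux_ne_int ((Measure.pi fun _ : Fin (N + 1) => μ).prod ν) _ _
      (hu 0) (hu i.succ)).integral_prod_left
end

section
/- (Theorem 2, Robust Disagreement Equality.) Suppose robust confidence–prediction calibration holds with over-confident class k' and constants b ≥ 1, 0 ≤ a ≤ 1. Then for every N ≥ 1, ∫_Θ Err(θ) dμ(θ) = b · ∫_{Θ^{N+1}} PDD_N(θ₀, θ₁, …, θ_N) d(μ^{⊗(N+1)}) − C, where C = (b − a) ∫_Ω h̃_{k'}(X(ω)) (1 − h̃_{k'}(X(ω))) dν(ω). -/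
open MeasureTheory

lemma aux_integrable {α : Type*} [MeasurableSpace α] (P : Measure α) [IsFiniteMeasure P]
    (f : α → ℝ) (hf : Measurable f) (h0 : ∀ x, 0 ≤ f x) (h1 : ∀ x, f x ≤ 1) :
    Integrable f P := by
  refine Integrable.of_bound hf.aestronglyMeasurable 1 (Filter.Eventually.of_forall fun x => ?_)
  rw [Real.norm_eq_abs, abs_of_nonneg (h0 x)]
  exact h1 x

lemma aux_calib {Ω : Type*} [mΩ : MeasurableSpace Ω] (ν : Measure Ω) [IsProbabilityMeasure ν]
    (H g : Ω → ℝ) (hH : Measurable H) (H0 : ∀ x, 0 ≤ H x) (H1 : ∀ x, H x ≤ 1)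
    (hg : Measurable g) (g0 : ∀ x, 0 ≤ g x) (g1 : ∀ x, g x ≤ 1) (c : ℝ)
    (hc : ν[g | MeasurableSpace.comap H Real.measurableSpace] =ᵐ[ν] fun ω => c * H ω) :
    ∫ ω, g ω ∂ν = c * ∫ ω, H ω ∂ν ∧
      ∫ ω, H ω * g ω ∂ν = c * ∫ ω, H ω * H ω ∂ν := by
  have hm : MeasurableSpace.comap H Real.measurableSpace ≤ mΩ := hH.comap_le
  constructor
  · rw [← integral_condExp hm, integral_congr_ae hc, integral_const_mul]
  · have hp := condExp_mul_of_stronglyMeasurable_left (μ := ν)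
      (m := MeasurableSpace.comap H Real.measurableSpace) (f := H) (g := g)
      (comap_measurable H).stronglyMeasurable
      (aux_integrable ν _ (hH.mul hg) (fun x => mul_nonneg (H0 x) (g0 x))
        (fun x => mul_le_one₀ (H1 x) (g0 x) (g1 x)))
      (aux_integrable ν g hg g0 g1)
    have e : ∫ ω, H ω * g ω ∂ν = ∫ ω, (H * g) ω ∂ν := rfl
    rw [e, ← integral_condExp hm, integral_congr_ae hp, ← integral_const_mul]
    apply integral_congr_ae
    filter_upwards [hc] with ω hω
    simp only [Pi.mul_apply, hω]
    ring

lemma aux_sum {K : ℕ} (i j : Fin K) :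
    (if i = j then (0:ℝ) else 1) =
      1 - ∑ k, (if i = k then (1:ℝ) else 0) * (if j = k then (1:ℝ) else 0) := by
  by_cases hij : i = j
  · simp [hij]
  · have : ∀ k, (if i = k then (1:ℝ) else 0) * (if j = k then (1:ℝ) else 0) = 0 := by
      intro k
      by_cases h1 : i = k
      · have : j ≠ k := fun h2 => hij (h1.trans h2.symm)
        simp [this]
      · simp [h1]
    simp [hij, this]

/-- Theorem 2 (Robust Disagreement Equality). -/
theorem robust_disagreement_equality
    {Θ Ω 𝒳 : Type*} [MeasurableSpace Θ] [MeasurableSpace Ω] [MeasurableSpace 𝒳]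
    (μ : Measure Θ) (ν : Measure Ω)
    [IsProbabilityMeasure μ] [IsProbabilityMeasure ν]
    (K : ℕ) (hK : 1 ≤ K)
    (h : Θ × 𝒳 → Fin K) (hmeas : Measurable h)
    (X : Ω → 𝒳) (hX : Measurable X)
    (Y : Ω → Fin K) (hY : Measurable Y)
    (htilde : Fin K → 𝒳 → ℝ)
    (htilde_def : ∀ k x, htilde k x = (μ {θ | h (θ, x) = k}).toReal)
    (Err : Θ → ℝ)
    (Err_def : ∀ θ, Err θ = (ν {ω | h (θ, X ω) ≠ Y ω}).toReal)
    (k' : Fin K) (a b : ℝ) (hb : 1 ≤ b) (ha0 : 0 ≤ a) (ha1 : a ≤ 1)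
    (calib_over :
      ν[(fun ω => if Y ω = k' then (1 : ℝ) else 0) |
          MeasurableSpace.comap (fun ω => htilde k' (X ω)) Real.measurableSpace]
        =ᵐ[ν] fun ω => a * htilde k' (X ω))
    (calib_rest : ∀ k : Fin K, k ≠ k' →
      ν[(fun ω => if Y ω = k then (1 : ℝ) else 0) |
          MeasurableSpace.comap (fun ω => htilde k (X ω)) Real.measurableSpace]
        =ᵐ[ν] fun ω => b * htilde k (X ω))
    (N : ℕ) (hN : 1 ≤ N)
    (PDD : (Fin (N + 1) → Θ) → ℝ)
    (PDD_def : ∀ θs : Fin (N + 1) → Θ,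
      PDD θs = ∫ ω, (1 / (N : ℝ)) *
        ∑ i : Fin N, (if h (θs 0, X ω) = h (θs i.succ, X ω) then (0 : ℝ) else 1) ∂ν) :
    ∫ θ, Err θ ∂μ =
      b * ∫ θs, PDD θs ∂(Measure.pi fun _ : Fin (N + 1) => μ) -
        (b - a) * ∫ ω, htilde k' (X ω) * (1 - htilde k' (X ω)) ∂ν := by
  have mI : ∀ k : Fin K, Measurable (fun j : Fin K => if j = k then (1:ℝ) else 0) :=
    fun k => Measurable.of_discrete
  have I0 : ∀ j k : Fin K, (0:ℝ) ≤ if j = k then (1:ℝ) else 0 := by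
    intro j k; split_ifs <;> norm_num
  have I1 : ∀ j k : Fin K, (if j = k then (1:ℝ) else 0) ≤ 1 := by
    intro j k; split_ifs <;> norm_num
  have mhx : ∀ x, Measurable fun θ => h (θ, x) := fun x => hmeas.comp measurable_prodMk_right
  have Hint : ∀ k x, ∫ θ, (if h (θ, x) = k then (1:ℝ) else 0) ∂μ = htilde k x := by
    intro k x
    have hs : MeasurableSet {θ | h (θ, x) = k} := mhx x (measurableSet_singleton k)
    have : (fun θ => if h (θ, x) = k then (1:ℝ) else 0)
        = Set.indicator {θ | h (θ, x) = k} (fun _ => (1:ℝ)) := by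
      ext θ; simp [Set.indicator_apply]
    rw [this, integral_indicator_const _ hs, htilde_def]
    simp [Measure.real]
  have mH : ∀ k, Measurable fun ω => htilde k (X ω) := by
    intro k
    have : htilde k = fun x => (μ {θ | h (θ, x) = k}).toReal := funext (htilde_def k)
    rw [this]
    have hs : MeasurableSet {p : Θ × 𝒳 | h p = k} := hmeas (measurableSet_singleton k)
    exact ((measurable_measure_prodMk_right (μ := μ) hs).ennreal_toReal).comp hX
  have H0 : ∀ k x, 0 ≤ htilde k x := fun k x => by
    rw [htilde_def]; exact ENNReal.toReal_nonneg
  have H1 : ∀ k x, htilde k x ≤ 1 := fun k x => by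
    rw [htilde_def]; exact measureReal_le_one
  have ih : ∀ k x, Integrable (fun θ => if h (θ, x) = k then (1:ℝ) else 0) μ := fun k x =>
    aux_integrable μ _ ((mI k).comp (mhx x)) (fun _ => I0 _ _) (fun _ => I1 _ _)
  have Hsum : ∀ x, ∑ k, htilde k x = 1 := by
    intro x
    simp_rw [← Hint]
    rw [← integral_finsetSum _ (fun k _ => ih k x)]
    simp
  have mY : ∀ k, Measurable fun ω => if Y ω = k then (1:ℝ) else 0 := fun k => (mI k).comp hY
  have iH : ∀ k, Integrable (fun ω => htilde k (X ω)) ν := fun k =>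
    aux_integrable ν _ (mH k) (fun _ => H0 _ _) (fun _ => H1 _ _)
  have iHH : ∀ k, Integrable (fun ω => htilde k (X ω) * htilde k (X ω)) ν := fun k =>
    aux_integrable ν _ ((mH k).mul (mH k)) (fun _ => mul_nonneg (H0 _ _) (H0 _ _))
      (fun _ => mul_le_one₀ (H1 _ _) (H0 _ _) (H1 _ _))
  have iHY : ∀ k, Integrable (fun ω => htilde k (X ω) * if Y ω = k then (1:ℝ) else 0) ν := fun k =>
    aux_integrable ν _ ((mH k).mul (mY k)) (fun _ => mul_nonneg (H0 _ _) (I0 _ _))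
      (fun _ => mul_le_one₀ (H1 _ _) (I0 _ _) (I1 _ _))
  have cal : ∀ k, ∃ c : ℝ, c = (if k = k' then a else b) ∧
      ∫ ω, (if Y ω = k then (1:ℝ) else 0) ∂ν = c * ∫ ω, htilde k (X ω) ∂ν ∧
      ∫ ω, htilde k (X ω) * (if Y ω = k then (1:ℝ) else 0) ∂ν
        = c * ∫ ω, htilde k (X ω) * htilde k (X ω) ∂ν := by
    intro k
    refine ⟨_, rfl, ?_⟩
    refine aux_calib ν (fun ω => htilde k (X ω)) _ (mH k) (fun _ => H0 _ _) (fun _ => H1 _ _)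
      (mY k) (fun _ => I0 _ _) (fun _ => I1 _ _) _ ?_
    by_cases hk : k = k'
    · subst hk; simpa using calib_over
    · simpa [hk] using calib_rest k hk
  -- the averaged error
  have mm : Measurable fun p : Θ × Ω => h (p.1, X p.2) :=
    hmeas.comp (measurable_fst.prodMk (hX.comp measurable_snd))
  have EE : ∫ θ, Err θ ∂μ =
      1 - ∑ k, ∫ ω, htilde k (X ω) * (if Y ω = k then (1:ℝ) else 0) ∂ν := by
    have e1 : ∀ θ, Err θ = ∫ ω, (if h (θ, X ω) = Y ω then (0:ℝ) else 1) ∂ν := by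
      intro θ
      have hs : MeasurableSet {ω | h (θ, X ω) ≠ Y ω} :=
        (measurableSet_eq_fun (mm.comp measurable_prodMk_left) hY).compl
      have : (fun ω => if h (θ, X ω) = Y ω then (0:ℝ) else 1)
          = Set.indicator {ω | h (θ, X ω) ≠ Y ω} (fun _ => (1:ℝ)) := by
        ext ω; by_cases hh : h (θ, X ω) = Y ω <;> simp [hh]
      rw [this, integral_indicator_const _ hs, Err_def]
      simp [Measure.real]
    simp_rw [e1]
    rw [integral_integral_swap (f := fun θ ω => if h (θ, X ω) = Y ω then (0:ℝ) else 1)]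
    · rw [← integral_finsetSum _ (fun k _ => iHY k)]
      have : (1:ℝ) = ∫ ω, (1:ℝ) ∂ν := by simp
      conv_rhs => enter [1]; rw [this]
      rw [← integral_sub (integrable_const _) (integrable_finsetSum _ (fun k _ => iHY k))]
      congr 1
      ext ω
      simp_rw [aux_sum]
      rw [integral_sub (integrable_const _)
        (integrable_finsetSum _ (fun k _ => (ih k _).mul_const _)),
        integral_finsetSum _ (fun k _ => (ih k _).mul_const _)]
      simp_rw [integral_mul_const, Hint]
      simp
    · refine aux_integrable _ _ ?_ ?_ ?_
      · exact Measurable.ite (measurableSet_eq_fun mm (hY.comp measurable_snd))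
          measurable_const measurable_const
      · rintro ⟨θ, ω⟩; simp only [Function.uncurry]; split_ifs <;> norm_num
      · rintro ⟨θ, ω⟩; simp only [Function.uncurry]; split_ifs <;> norm_num
  -- the averaged disagreement
  have hN0 : (N : ℝ) ≠ 0 := by
    have : N ≠ 0 := by omega
    exact_mod_cast this
  have PP : ∫ θs, PDD θs ∂(Measure.pi fun _ : Fin (N + 1) => μ) =
      1 - ∑ k, ∫ ω, htilde k (X ω) * htilde k (X ω) ∂ν := by
    have mi : ∀ i : Fin (N+1), Measurable fun p : (Fin (N + 1) → Θ) × Ω => h (p.1 i, X p.2) :=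
      fun i => hmeas.comp (((measurable_pi_apply i).comp measurable_fst).prodMk
        (hX.comp measurable_snd))
    have mF : ∀ i : Fin N, Measurable fun p : (Fin (N + 1) → Θ) × Ω =>
        (if h (p.1 0, X p.2) = h (p.1 i.succ, X p.2) then (0 : ℝ) else 1) := fun i =>
      Measurable.ite (measurableSet_eq_fun (mi 0) (mi i.succ)) measurable_const measurable_const
    have F0 : ∀ p q : Fin K, (0:ℝ) ≤ if p = q then (0:ℝ) else 1 := by
      intro j k; split_ifs <;> norm_num
    have F1 : ∀ p q : Fin K, (if p = q then (0:ℝ) else 1) ≤ 1 := by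
      intro j k; split_ifs <;> norm_num
    have iF : ∀ (P : Measure ((Fin (N + 1) → Θ) × Ω)) [IsProbabilityMeasure P] (i : Fin N),
        Integrable (fun p : (Fin (N + 1) → Θ) × Ω =>
        (if h (p.1 0, X p.2) = h (p.1 i.succ, X p.2) then (0 : ℝ) else 1)) P := fun P _ i =>
      aux_integrable P _ (mF i) (fun _ => F0 _ _) (fun _ => F1 _ _)
    have ev : ∀ (k : Fin K) (x : 𝒳) (i : Fin (N+1)),
        ∫ θs : Fin (N+1) → Θ, (if h (θs i, x) = k then (1:ℝ) else 0) ∂(Measure.pi fun _ => μ)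
          = htilde k x := by
      intro k x i
      have e := integral_map (μ := Measure.pi fun _ : Fin (N+1) => μ)
        (φ := Function.eval i) (measurable_pi_apply i).aemeasurable
        (f := fun θ => if h (θ, x) = k then (1:ℝ) else 0)
        ((mI k).comp (mhx x)).aestronglyMeasurable
      rw [(measurePreserving_eval (fun _ : Fin (N+1) => μ) i).map_eq, Hint] at e
      exact e.symm
    have mk : ∀ (k : Fin K) (x : 𝒳) (i : Fin (N+1)),
        Measurable fun θs : Fin (N+1) → Θ => (if h (θs i, x) = k then (1:ℝ) else 0) :=
      fun k x i => ((mI k).comp (mhx x)).comp (measurable_pi_apply i)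
    have ev2 : ∀ (x : 𝒳) (i : Fin N),
        ∫ θs : Fin (N+1) → Θ, (if h (θs 0, x) = h (θs i.succ, x) then (0:ℝ) else 1)
          ∂(Measure.pi fun _ => μ) = 1 - ∑ k, htilde k x * htilde k x := by
      intro x i
      have ii : ∀ k : Fin K, Integrable (fun θs : Fin (N+1) → Θ =>
          (if h (θs 0, x) = k then (1:ℝ) else 0) * (if h (θs i.succ, x) = k then (1:ℝ) else 0))
          (Measure.pi fun _ => μ) := fun k =>
        aux_integrable _ _ ((mk k x 0).mul (mk k x i.succ))
          (fun _ => mul_nonneg (I0 _ _) (I0 _ _))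
          (fun _ => mul_le_one₀ (I1 _ _) (I0 _ _) (I1 _ _))
      simp_rw [aux_sum]
      rw [integral_sub (integrable_const _) (integrable_finsetSum _ (fun k _ => ii k)),
        integral_finsetSum _ (fun k _ => ii k)]
      congr 1
      · simp
      · refine Finset.sum_congr rfl fun k _ => ?_
        have ind := (ProbabilityTheory.iIndepFun_pi (μ := fun _ : Fin (N+1) => μ)
          (X := fun _ θ => if h (θ, x) = k then (1:ℝ) else 0)
          (fun _ => ((mI k).comp (mhx x)).aemeasurable)).indepFun (Fin.succ_ne_zero i).symm
        rw [ind.integral_fun_mul_eq_mul_integral (mk k x 0).aestronglyMeasurable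
          (mk k x i.succ).aestronglyMeasurable, ev, ev]
    simp_rw [PDD_def]
    rw [integral_integral_swap (f := fun (θs : Fin (N+1) → Θ) ω => (1 / (N : ℝ)) *
        ∑ i : Fin N, (if h (θs 0, X ω) = h (θs i.succ, X ω) then (0 : ℝ) else 1))]
    · rw [← integral_finsetSum _ (fun k _ => iHH k)]
      have : (1:ℝ) = ∫ ω, (1:ℝ) ∂ν := by simp
      conv_rhs => enter [1]; rw [this]
      rw [← integral_sub (integrable_const _) (integrable_finsetSum _ (fun k _ => iHH k))]
      congr 1
      ext ω
      rw [integral_const_mul, integral_finsetSum]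
      · simp_rw [ev2]
        simp
        field_simp
      · intro i _
        exact aux_integrable _ _ ((mF i).comp measurable_prodMk_right)
          (fun _ => F0 _ _) (fun _ => F1 _ _)
    · exact (integrable_finsetSum _ (fun i _ => iF _ i)).const_mul _
  -- total mass
  have c1 : ∀ k, ∫ ω, (if Y ω = k then (1:ℝ) else 0) ∂ν =
      (if k = k' then a else b) * ∫ ω, htilde k (X ω) ∂ν := fun k => by
    obtain ⟨c, rfl, h1, h2⟩ := cal k; exact h1
  have c2 : ∀ k, ∫ ω, htilde k (X ω) * (if Y ω = k then (1:ℝ) else 0) ∂ν =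
      (if k = k' then a else b) * ∫ ω, htilde k (X ω) * htilde k (X ω) ∂ν := fun k => by
    obtain ⟨c, rfl, h1, h2⟩ := cal k; exact h2
  have t1 : ∑ k, (if k = k' then a else b) * ∫ ω, htilde k (X ω) ∂ν = 1 := by
    simp_rw [← c1]
    rw [← integral_finsetSum _ (fun k _ => aux_integrable ν _ (mY k) (fun _ => I0 _ _)
      (fun _ => I1 _ _))]
    simp
  have t2 : ∑ k, ∫ ω, htilde k (X ω) ∂ν = 1 := by
    rw [← integral_finsetSum _ (fun k _ => iH k)]
    simp [Hsum]
  have split : ∀ f : Fin K → ℝ, ∑ k, (if k = k' then a else b) * f k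
      = b * ∑ k, f k - (b - a) * f k' := by
    intro f
    have : ∀ k, (if k = k' then a else b) * f k
        = b * f k - (if k = k' then (b - a) * f k else 0) := by
      intro k; split_ifs <;> ring
    simp_rw [this, Finset.sum_sub_distrib, ← Finset.mul_sum]
    simp
  have last : ∫ ω, htilde k' (X ω) * (1 - htilde k' (X ω)) ∂ν
      = ∫ ω, htilde k' (X ω) ∂ν - ∫ ω, htilde k' (X ω) * htilde k' (X ω) ∂ν := by
    rw [← integral_sub (iH k') (iHH k')]
    congr 1
    ext ω
    ring
  rw [EE, PP, last]
  simp_rw [c2]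
  rw [split] at t1 ⊢
  rw [t2] at t1
  linarith
end

section
/- (Calibration expansion step in the proof of Theorem 1.) Suppose confidence–prediction calibration holds. Then ∫_Ω (1 − h̃_{Y(ω)}(X(ω))) dν(ω) = Σ_{k ∈ Fin K} ∫_Ω h̃_k(X(ω)) (1 − h̃_k(X(ω))) dν(ω). -/
open MeasureTheory

/-- Calibration expansion step in the proof of Theorem 1. -/
theorem calibration_expansion
    {Θ Ω 𝒳 : Type*} [MeasurableSpace Θ] [MeasurableSpace Ω] [MeasurableSpace 𝒳]
    (μ : Measure Θ) (ν : Measure Ω)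
    [IsProbabilityMeasure μ] [IsProbabilityMeasure ν]
    (K : ℕ) (hK : 1 ≤ K)
    (h : Θ × 𝒳 → Fin K) (hmeas : Measurable h)
    (X : Ω → 𝒳) (hX : Measurable X)
    (Y : Ω → Fin K) (hY : Measurable Y)
    (htilde : Fin K → 𝒳 → ℝ)
    (htilde_def : ∀ k x, htilde k x = (μ {θ | h (θ, x) = k}).toReal)
    (calib : ∀ k : Fin K,
      ν[(fun ω => if Y ω = k then (1 : ℝ) else 0) |
          MeasurableSpace.comap (fun ω => htilde k (X ω)) Real.measurableSpace]
        =ᵐ[ν] fun ω => htilde k (X ω)) :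
    ∫ ω, (1 - htilde (Y ω) (X ω)) ∂ν =
      ∑ k : Fin K, ∫ ω, htilde k (X ω) * (1 - htilde k (X ω)) ∂ν := by
  have hm : ∀ k, Measurable (htilde k) := by
    intro k
    have e : htilde k = fun x => (μ ((fun θ => (θ, x)) ⁻¹' (h ⁻¹' {k}))).toReal := by
      funext x
      exact htilde_def k x
    rw [e]
    exact (measurable_measure_prodMk_right (hmeas (measurableSet_singleton k))).ennreal_toReal
  have hb : ∀ k x, ‖1 - htilde k x‖ ≤ 1 := by
    intro k x
    have h0 : 0 ≤ htilde k x := by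
      rw [htilde_def]
      exact ENNReal.toReal_nonneg
    have h1 : htilde k x ≤ 1 := by
      rw [htilde_def]
      exact measureReal_le_one
    rw [Real.norm_eq_abs, abs_le]
    constructor <;> linarith
  have hg : ∀ k, Integrable (fun ω => if Y ω = k then (1 : ℝ) else 0) ν := by
    intro k
    refine Integrable.of_bound (C := 1) ?_ ?_
    · exact (Measurable.ite (hY (measurableSet_singleton k)) measurable_const
        measurable_const).aestronglyMeasurable
    · refine Filter.Eventually.of_forall fun ω => ?_
      split_ifs <;> simp
  have hfg : ∀ k, Integrable
      (fun ω => (1 - htilde k (X ω)) * (if Y ω = k then (1 : ℝ) else 0)) ν := by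
    intro k
    refine (hg k).bdd_mul (c := 1) ?_ (Filter.Eventually.of_forall fun ω => hb k (X ω))
    exact (measurable_const.sub ((hm k).comp hX)).aestronglyMeasurable
  have e1 : ∀ ω, 1 - htilde (Y ω) (X ω) =
      ∑ k : Fin K, (1 - htilde k (X ω)) * (if Y ω = k then (1 : ℝ) else 0) := by
    intro ω
    simp
  simp_rw [e1]
  rw [integral_finsetSum _ fun k _ => hfg k]
  refine Finset.sum_congr rfl fun k _ => ?_
  have hle : MeasurableSpace.comap (fun ω => htilde k (X ω)) Real.measurableSpace ≤
      (inferInstance : MeasurableSpace Ω) := ((hm k).comp hX).comap_le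
  have hf : StronglyMeasurable[MeasurableSpace.comap (fun ω => htilde k (X ω))
      Real.measurableSpace] (fun ω => 1 - htilde k (X ω)) := by
    apply Measurable.stronglyMeasurable
    exact (measurable_const.sub measurable_id).comp (comap_measurable (fun ω => htilde k (X ω)))
  have key := condExp_mul_of_stronglyMeasurable_left hf (hfg k) (hg k)
  have hint := integral_condExp (μ := ν) hle
    (f := (fun ω => 1 - htilde k (X ω)) * (fun ω => if Y ω = k then (1 : ℝ) else 0))
  have e2 : ∫ ω, (1 - htilde k (X ω)) * (if Y ω = k then (1 : ℝ) else 0) ∂ν =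
      ∫ ω, ((fun ω => 1 - htilde k (X ω)) * (fun ω => if Y ω = k then (1 : ℝ) else 0)) ω ∂ν := rfl
  rw [e2, ← hint]
  apply integral_congr_ae
  filter_upwards [key, calib k] with ω h1 h2
  rw [h1, Pi.mul_apply, h2, mul_comm]
end

section
/- (N-sample PDD reduces to the pairwise disagreement.) For every N ≥ 1, the expected prediction disagreement with N dropout inferences does not depend on N and equals the expected pairwise disagreement: ∫_{Θ^{N+1}} PDD_N(θ₀, θ₁, …, θ_N) d(μ^{⊗(N+1)}) = ∫_Ω Σ_{k ∈ Fin K} h̃_k(X(ω)) (1 − h̃_k(X(ω))) dν(ω), and in particular it equals ∫_{Θ×Θ} ( ∫_Ω 1{h(θ, X(ω)) ≠ h(θ', X(ω))} dν(ω) ) d(μ ⊗ μ)(θ, θ'). -/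
open MeasureTheory

/-- N-sample PDD reduces to the pairwise disagreement. -/
theorem pdd_reduces_to_pairwise
    {Θ Ω 𝒳 : Type*} [MeasurableSpace Θ] [MeasurableSpace Ω] [MeasurableSpace 𝒳]
    (μ : Measure Θ) (ν : Measure Ω)
    [IsProbabilityMeasure μ] [IsProbabilityMeasure ν]
    (K : ℕ) (hK : 1 ≤ K)
    (h : Θ × 𝒳 → Fin K) (hmeas : Measurable h)
    (X : Ω → 𝒳) (hX : Measurable X)
    (Y : Ω → Fin K) (hY : Measurable Y)
    (htilde : Fin K → 𝒳 → ℝ)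
    (htilde_def : ∀ k x, htilde k x = (μ {θ | h (θ, x) = k}).toReal)
    (N : ℕ) (hN : 1 ≤ N)
    (PDD : (Fin (N + 1) → Θ) → ℝ)
    (PDD_def : ∀ θs : Fin (N + 1) → Θ,
      PDD θs = ∫ ω, (1 / (N : ℝ)) *
        ∑ i : Fin N, (if h (θs 0, X ω) = h (θs i.succ, X ω) then (0 : ℝ) else 1) ∂ν) :
    ∫ θs, PDD θs ∂(Measure.pi fun _ : Fin (N + 1) => μ) =
        ∫ ω, ∑ k : Fin K, htilde k (X ω) * (1 - htilde k (X ω)) ∂ν ∧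
      ∫ θs, PDD θs ∂(Measure.pi fun _ : Fin (N + 1) => μ) =
        ∫ p : Θ × Θ,
          (∫ ω, (if h (p.1, X ω) = h (p.2, X ω) then (0 : ℝ) else 1) ∂ν) ∂(μ.prod μ) := by
  classical
  have hbd : ∀ (a b : Fin K), ‖(if a = b then (0 : ℝ) else 1)‖ ≤ 1 := by
    intro a b
    split_ifs <;> simp
  have hjoint : Measurable (fun q : (Θ × Θ) × Ω =>
      if h (q.1.1, X q.2) = h (q.1.2, X q.2) then (0 : ℝ) else 1) := by
    refine Measurable.ite (measurableSet_eq_fun ?_ ?_) measurable_const measurable_const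
    · exact hmeas.comp (by fun_prop)
    · exact hmeas.comp (by fun_prop)
  have hjint : Integrable (fun q : (Θ × Θ) × Ω =>
      if h (q.1.1, X q.2) = h (q.1.2, X q.2) then (0 : ℝ) else 1) ((μ.prod μ).prod ν) :=
    Integrable.of_bound hjoint.aestronglyMeasurable 1 (Filter.Eventually.of_forall fun q => hbd _ _)
  have hgint := hjint.integral_prod_left
  set g : Θ × Θ → ℝ := fun p =>
    ∫ ω, (if h (p.1, X ω) = h (p.2, X ω) then (0 : ℝ) else 1) ∂ν with hg
  have hPDD : ∀ θs, PDD θs = (1 / (N : ℝ)) * ∑ i : Fin N, g (θs 0, θs i.succ) := by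
    intro θs
    rw [PDD_def, integral_const_mul, integral_finsetSum]
    intro i _
    refine Integrable.of_bound (Measurable.aestronglyMeasurable ?_) 1
      (Filter.Eventually.of_forall fun q => hbd _ _)
    refine Measurable.ite (measurableSet_eq_fun ?_ ?_) measurable_const measurable_const
    · exact hmeas.comp (by fun_prop)
    · exact hmeas.comp (by fun_prop)
  have hmp : ∀ i : Fin N, MeasurePreserving (fun θs : Fin (N + 1) → Θ => (θs 0, θs i.succ))
      (Measure.pi fun _ : Fin (N + 1) => μ) (μ.prod μ) := by
    intro i
    refine ⟨by fun_prop, ?_⟩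
    have hind := ProbabilityTheory.iIndepFun_pi (μ := fun _ : Fin (N + 1) => μ)
      (X := fun _ (x : Θ) => x) (fun _ => aemeasurable_id)
    have h2 := hind.indepFun (Fin.succ_ne_zero i).symm
    rw [ProbabilityTheory.indepFun_iff_map_prod_eq_prod_map_map 
      (measurable_pi_apply _).aemeasurable (measurable_pi_apply _).aemeasurable] at h2
    rw [h2]
    congr 1
    · exact (measurePreserving_eval (fun _ : Fin (N + 1) => μ) 0).map_eq
    · exact (measurePreserving_eval (fun _ : Fin (N + 1) => μ) i.succ).map_eq
  have hsecond : ∫ θs, PDD θs ∂(Measure.pi fun _ : Fin (N + 1) => μ) = ∫ p, g p ∂(μ.prod μ) := by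
    have hi : ∀ i : Fin N, ∫ θs : Fin (N + 1) → Θ, g (θs 0, θs i.succ)
        ∂(Measure.pi fun _ : Fin (N + 1) => μ) = ∫ p, g p ∂(μ.prod μ) := by
      intro i
      rw [← (hmp i).map_eq, integral_map (hmp i).measurable.aemeasurable]
      rw [(hmp i).map_eq]
      exact hgint.aestronglyMeasurable
    simp_rw [hPDD]
    rw [integral_const_mul, integral_finsetSum]
    · simp_rw [hi]
      have : (N : ℝ) ≠ 0 := by positivity
      simp
      field_simp
    · intro i _
      exact (hmp i).integrable_comp_of_integrable hgint
  refine ⟨?_, hsecond⟩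
  rw [hsecond, hg]
  rw [integral_integral_swap (f := fun (p : Θ × Θ) ω =>
    if h (p.1, X ω) = h (p.2, X ω) then (0 : ℝ) else 1) hjint]
  refine integral_congr_ae (Filter.Eventually.of_forall fun ω => ?_)
  have hset : ∀ k, MeasurableSet {θ | h (θ, X ω) = k} := fun k =>
    (hmeas.comp (by fun_prop : Measurable fun θ : Θ => (θ, X ω))) (measurableSet_singleton k)
  let f : Fin K → Θ → ℝ := fun k => Set.indicator {θ | h (θ, X ω) = k} (fun _ => (1 : ℝ))
  have hfint : ∀ k, Integrable (f k) μ := fun k => (integrable_const 1).indicator (hset k)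
  have hfi : ∀ k, ∫ θ, f k θ ∂μ = htilde k (X ω) := by
    intro k
    rw [htilde_def, integral_indicator (hset k)]
    simp [Measure.real]
  have hsum : ∀ p : Θ × Θ, (if h (p.1, X ω) = h (p.2, X ω) then (0 : ℝ) else 1)
      = ∑ k, f k p.1 * (1 - f k p.2) := by
    intro p
    simp only [f, Set.indicator_apply, Set.mem_ofPred_eq, ite_mul, one_mul, zero_mul]
    rw [Finset.sum_ite_eq]
    by_cases hh : h (p.1, X ω) = h (p.2, X ω)
    · simp [hh]
    · simp [hh, Ne.symm hh]
  simp only [hsum]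
  have hf2 : ∀ k, Integrable (fun θ => 1 - f k θ) μ := fun k => (integrable_const 1).sub (hfint k)
  rw [integral_finsetSum _ (fun k _ => (hfint k).mul_prod (hf2 k))]
  refine Finset.sum_congr rfl fun k _ => ?_
  rw [integral_prod_mul (f k) (fun θ => 1 - f k θ), integral_sub (integrable_const 1) (hfint k), hfi]
  simp
end

section
/- (Robust-calibration error decomposition step in the proof of Theorem 2.) Suppose robust confidence–prediction calibration holds with over-confident class k' and constants b ≥ 1, 0 ≤ a ≤ 1. Then ∫_Ω (1 − h̃_{Y(ω)}(X(ω))) dν(ω) = a · T_{k'} + b · Σ_{k ≠ k'} T_k, where T_k = ∫_Ω h̃_k(X(ω)) (1 − h̃_k(X(ω))) dν(ω). -/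
open MeasureTheory

lemma calib_key {Ω : Type*} [MeasurableSpace Ω] (ν : Measure Ω) [IsProbabilityMeasure ν]
    (f g : Ω → ℝ) (c : ℝ) (hf : Integrable f ν) (hg : Measurable g)
    (h0 : ∀ ω, 0 ≤ g ω) (h1 : ∀ ω, g ω ≤ 1)
    (hc : ν[f | MeasurableSpace.comap g Real.measurableSpace] =ᵐ[ν] fun ω => c * g ω) :
    Integrable (fun ω => f ω * (1 - g ω)) ν ∧
    ∫ ω, f ω * (1 - g ω) ∂ν = c * ∫ ω, g ω * (1 - g ω) ∂ν := by
  have hi : Integrable (fun ω => f ω * (1 - g ω)) ν := by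
    refine hf.mul_bdd (c := 1) (by fun_prop) (Filter.Eventually.of_forall fun ω => ?_)
    rw [Real.norm_eq_abs, abs_le]
    constructor <;> linarith [h0 ω, h1 ω]
  refine ⟨hi, ?_⟩
  have hm : MeasurableSpace.comap g Real.measurableSpace ≤ ‹MeasurableSpace Ω› := hg.comap_le
  have hgm : Measurable[MeasurableSpace.comap g Real.measurableSpace] g :=
    comap_measurable g
  have hsm : StronglyMeasurable[MeasurableSpace.comap g Real.measurableSpace]
      (fun ω => 1 - g ω) := (hgm.const_sub 1).stronglyMeasurable
  have e := condExp_mul_of_stronglyMeasurable_right (μ := ν) (f := f) hsm hi hf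
  rw [← integral_condExp hm, ← integral_const_mul]
  refine integral_congr_ae ?_
  filter_upwards [e, hc] with ω h2 h3
  have h4 : (ν[fun ω => f ω * (1 - g ω) | MeasurableSpace.comap g Real.measurableSpace]) ω
    = (ν[f | MeasurableSpace.comap g Real.measurableSpace]) ω * (1 - g ω) := h2
  rw [h4, h3]; ring

/-- Robust-calibration error decomposition step in the proof of Theorem 2. -/
theorem robust_calibration_error_decomposition
    {Θ Ω 𝒳 : Type*} [MeasurableSpace Θ] [MeasurableSpace Ω] [MeasurableSpace 𝒳]
    (μ : Measure Θ) (ν : Measure Ω)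
    [IsProbabilityMeasure μ] [IsProbabilityMeasure ν]
    (K : ℕ) (hK : 1 ≤ K)
    (h : Θ × 𝒳 → Fin K) (hmeas : Measurable h)
    (X : Ω → 𝒳) (hX : Measurable X)
    (Y : Ω → Fin K) (hY : Measurable Y)
    (htilde : Fin K → 𝒳 → ℝ)
    (htilde_def : ∀ k x, htilde k x = (μ {θ | h (θ, x) = k}).toReal)
    (k' : Fin K) (a b : ℝ) (hb : 1 ≤ b) (ha0 : 0 ≤ a) (ha1 : a ≤ 1)
    (calib_over :
      ν[(fun ω => if Y ω = k' then (1 : ℝ) else 0) |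
          MeasurableSpace.comap (fun ω => htilde k' (X ω)) Real.measurableSpace]
        =ᵐ[ν] fun ω => a * htilde k' (X ω))
    (calib_rest : ∀ k : Fin K, k ≠ k' →
      ν[(fun ω => if Y ω = k then (1 : ℝ) else 0) |
          MeasurableSpace.comap (fun ω => htilde k (X ω)) Real.measurableSpace]
        =ᵐ[ν] fun ω => b * htilde k (X ω))
    (T : Fin K → ℝ)
    (T_def : ∀ k, T k = ∫ ω, htilde k (X ω) * (1 - htilde k (X ω)) ∂ν) :
    ∫ ω, (1 - htilde (Y ω) (X ω)) ∂ν =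
      a * T k' + b * ∑ k ∈ Finset.univ.erase k', T k := by
  have hgm : ∀ k, Measurable fun ω => htilde k (X ω) := by
    intro k
    have hk : Measurable fun x => μ ((fun θ => (θ, x)) ⁻¹' (h ⁻¹' {k})) :=
      measurable_measure_prodMk_right (hmeas (measurableSet_singleton k))
    have e : (fun ω => htilde k (X ω)) =
        fun ω => (μ ((fun θ => (θ, X ω)) ⁻¹' (h ⁻¹' {k}))).toReal := by
      funext ω
      rw [htilde_def]; rfl
    rw [e]
    exact (hk.comp hX).ennreal_toReal
  have h0 : ∀ k ω, 0 ≤ htilde k (X ω) := fun k ω => by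
    rw [htilde_def]; exact ENNReal.toReal_nonneg
  have h1 : ∀ k ω, htilde k (X ω) ≤ 1 := fun k ω => by
    rw [htilde_def]; exact measureReal_le_one
  have hf : ∀ k, Integrable (fun ω => if Y ω = k then (1 : ℝ) else 0) ν := by
    intro k
    have := (integrable_const (μ := ν) (1 : ℝ)).indicator (hY (measurableSet_singleton k))
    refine this.congr (Filter.Eventually.of_forall fun ω => ?_)
    by_cases hk : Y ω = k <;> simp [Set.indicator, hk]
  have key := fun k => calib_key ν _ _ (if k = k' then a else b) (hf k) (hgm k) (h0 k) (h1 k) (by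
    by_cases hk : k = k'
    · subst hk; simpa using calib_over
    · simpa [hk] using calib_rest k hk)
  have e : (fun ω => 1 - htilde (Y ω) (X ω)) = fun ω =>
      ∑ k, (if Y ω = k then (1 : ℝ) else 0) * (1 - htilde k (X ω)) := by
    funext ω; simp
  rw [e, integral_finsetSum _ (fun k _ => (key k).1),
    ← Finset.add_sum_erase _ _ (Finset.mem_univ k'), (key k').2, if_pos rfl, ← T_def,
    Finset.mul_sum]
  congr 1
  refine Finset.sum_congr rfl fun k hk => ?_
  rw [(key k).2, if_neg (Finset.ne_of_mem_erase hk), ← T_def]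
end

section
/- (Generalized robust disagreement equality for multiple over-confident classes.) Suppose that for every class k ∈ Fin K there is a constant c_k ≥ 0 such that the conditional expectation ν[1{Y = k} | σ(ω ↦ h̃_k(X(ω)))] equals ω ↦ c_k · h̃_k(X(ω)) ν-almost surely. Then ∫_Θ Err(θ) dμ(θ) = Σ_{k ∈ Fin K} c_k · T_k, where T_k = ∫_Ω h̃_k(X(ω)) (1 − h̃_k(X(ω))) dν(ω); consequently, for every constant b and every N ≥ 1, b · ∫_{Θ^{N+1}} PDD_N d(μ^{⊗(N+1)}) − ∫_Θ Err(θ) dμ(θ) = Σ_{k ∈ Fin K} (b − c_k) · T_k. -/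
open MeasureTheory

lemma aux_pi_pair {Θ : Type*} [MeasurableSpace Θ] (μ : Measure Θ) [IsProbabilityMeasure μ]
    (N : ℕ) (i : Fin N) (f g : Θ → ℝ) :
    ∫ θs, f (θs 0) * g (θs i.succ) ∂(Measure.pi fun _ : Fin (N + 1) => μ)
      = (∫ θ, f θ ∂μ) * ∫ θ, g θ ∂μ := by
  have key := integral_fintype_prod_eq_prod (μ := fun _ : Fin (N + 1) => μ)
    (f := (Fin.cons f (fun j : Fin N => if j = i then g else fun _ => 1) : Fin (N + 1) → Θ → ℝ))
  simp only [Fin.prod_univ_succ, Fin.cons_zero, Fin.cons_succ] at key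
  have e1 : ∀ θs : Fin (N + 1) → Θ,
      ∏ j : Fin N, (if j = i then g else fun _ => 1) (θs j.succ) = g (θs i.succ) := by
    intro θs
    rw [Finset.prod_eq_single i]
    · simp
    · intro j _ hj; simp [hj]
    · simp
  have e2 : ∏ j : Fin N, ∫ θ, (if j = i then g else fun _ => 1) θ ∂μ = ∫ θ, g θ ∂μ := by
    rw [Finset.prod_eq_single i]
    · simp
    · intro j _ hj; simp [hj]
    · simp
  simp only [e1, e2] at key
  exact key

/-- Generalized robust disagreement equality for multiple over-confident classes. -/
theorem generalized_robust_disagreement_equality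
    {Θ Ω 𝒳 : Type*} [MeasurableSpace Θ] [MeasurableSpace Ω] [MeasurableSpace 𝒳]
    (μ : Measure Θ) (ν : Measure Ω)
    [IsProbabilityMeasure μ] [IsProbabilityMeasure ν]
    (K : ℕ) (hK : 1 ≤ K)
    (h : Θ × 𝒳 → Fin K) (hmeas : Measurable h)
    (X : Ω → 𝒳) (hX : Measurable X)
    (Y : Ω → Fin K) (hY : Measurable Y)
    (htilde : Fin K → 𝒳 → ℝ)
    (htilde_def : ∀ k x, htilde k x = (μ {θ | h (θ, x) = k}).toReal)
    (Err : Θ → ℝ)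
    (Err_def : ∀ θ, Err θ = (ν {ω | h (θ, X ω) ≠ Y ω}).toReal)
    (c : Fin K → ℝ) (hc : ∀ k, 0 ≤ c k)
    (calib : ∀ k : Fin K,
      ν[(fun ω => if Y ω = k then (1 : ℝ) else 0) |
          MeasurableSpace.comap (fun ω => htilde k (X ω)) Real.measurableSpace]
        =ᵐ[ν] fun ω => c k * htilde k (X ω))
    (T : Fin K → ℝ)
    (T_def : ∀ k, T k = ∫ ω, htilde k (X ω) * (1 - htilde k (X ω)) ∂ν)
    (PDD : (N : ℕ) → (Fin (N + 1) → Θ) → ℝ)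
    (PDD_def : ∀ (N : ℕ) (θs : Fin (N + 1) → Θ),
      PDD N θs = ∫ ω, (1 / (N : ℝ)) *
        ∑ i : Fin N, (if h (θs 0, X ω) = h (θs i.succ, X ω) then (0 : ℝ) else 1) ∂ν) :
    ∫ θ, Err θ ∂μ = ∑ k : Fin K, c k * T k ∧
      ∀ (b : ℝ) (N : ℕ), 1 ≤ N →
        b * (∫ θs, PDD N θs ∂(Measure.pi fun _ : Fin (N + 1) => μ)) -
            ∫ θ, Err θ ∂μ =
          ∑ k : Fin K, (b - c k) * T k := by
  classical
  have hmk : ∀ k, MeasurableSet {p : Θ × 𝒳 | h p = k} := fun k =>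
    hmeas (measurableSet_singleton k)
  have hsec : ∀ k x, MeasurableSet {θ | h (θ, x) = k} := fun k x =>
    (hmeas.comp measurable_prodMk_right) (measurableSet_singleton k)
  have Hm : ∀ k, Measurable (htilde k) := by
    intro k
    have : htilde k = fun x => (μ ((fun θ => (θ, x)) ⁻¹' {p : Θ × 𝒳 | h p = k})).toReal := by
      funext x; rw [htilde_def]; rfl
    rw [this]
    exact (measurable_measure_prodMk_right (hmk k)).ennreal_toReal
  have HXm : ∀ k, Measurable fun ω => htilde k (X ω) := fun k => (Hm k).comp hX
  have H0 : ∀ k x, 0 ≤ htilde k x := fun k x => by rw [htilde_def]; positivity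
  have H1 : ∀ k x, htilde k x ≤ 1 := fun k x => by
    rw [htilde_def]; exact measureReal_le_one
  have Hint : ∀ k x, ∫ θ, (if h (θ, x) = k then (1 : ℝ) else 0) ∂μ = htilde k x := by
    intro k x
    rw [htilde_def]
    have := integral_indicator_one (μ := μ) (hsec k x)
    rw [← measureReal_def, ← this]
    congr 1
    funext θ
    by_cases hh : h (θ, x) = k <;> simp [hh]
  have TI : ∀ k, Integrable (fun ω => htilde k (X ω) * (1 - htilde k (X ω))) ν := fun k =>
    Integrable.of_bound ((HXm k).mul (measurable_const.sub (HXm k))).aestronglyMeasurable 1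
      (Filter.Eventually.of_forall fun ω => by
        have a := H0 k (X ω)
        have b := H1 k (X ω)
        rw [Real.norm_eq_abs, abs_le]; constructor <;> nlinarith)
  -- conditional expectation step
  have cal : ∀ k, ∫ ω, (if Y ω = k then (1 : ℝ) else 0) * (1 - htilde k (X ω)) ∂ν
      = c k * T k := by
    intro k
    have hle : MeasurableSpace.comap (fun ω => htilde k (X ω)) Real.measurableSpace
        ≤ (inferInstance : MeasurableSpace Ω) := (HXm k).comap_le
    have hYm : Measurable fun ω => if Y ω = k then (1 : ℝ) else 0 :=
      Measurable.ite (hY (measurableSet_singleton k)) measurable_const measurable_const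
    have hfi : Integrable (fun ω => if Y ω = k then (1 : ℝ) else 0) ν :=
      Integrable.of_bound hYm.aestronglyMeasurable 1
        (Filter.Eventually.of_forall fun ω => by split_ifs <;> simp)
    have hfg : Integrable ((fun ω => if Y ω = k then (1 : ℝ) else 0) *
        fun ω => 1 - htilde k (X ω)) ν :=
      Integrable.of_bound (hYm.mul (measurable_const.sub (HXm k))).aestronglyMeasurable 1
        (Filter.Eventually.of_forall fun ω => by
          have a := H0 k (X ω)
          have b := H1 k (X ω)
          simp only [Pi.mul_apply]
          rw [Real.norm_eq_abs, abs_le]; split_ifs <;> constructor <;> linarith)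
    have hg : StronglyMeasurable[MeasurableSpace.comap (fun ω => htilde k (X ω))
        Real.measurableSpace] (fun ω => 1 - htilde k (X ω)) := by
      apply Measurable.stronglyMeasurable
      exact (measurable_const.sub measurable_id).comp (comap_measurable (fun ω => htilde k (X ω)))
    have hpull := condExp_mul_of_stronglyMeasurable_right hg hfg hfi
    have e := integral_condExp hle (μ := ν) (f := (fun ω => if Y ω = k then (1 : ℝ) else 0) *
        fun ω => 1 - htilde k (X ω))
    simp only [Pi.mul_apply] at e
    rw [← e, T_def, ← integral_const_mul]
    apply integral_congr_ae
    filter_upwards [hpull, calib k] with ω h1 h2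
    rw [h1, Pi.mul_apply, h2]; ring
  have sumind : ∀ a b : Fin K, (if a = b then (0 : ℝ) else 1)
      = ∑ k, (if b = k then (1 : ℝ) else 0) * (1 - if a = k then (1 : ℝ) else 0) := by
    intro a b
    simp [ite_mul]
    split_ifs <;> simp
  have hEm : ∀ k x, Integrable (fun θ => if h (θ, x) = k then (1 : ℝ) else 0) μ := fun k x =>
    Integrable.of_bound (Measurable.ite (hsec k x) measurable_const
      measurable_const).aestronglyMeasurable 1
      (Filter.Eventually.of_forall fun ω => by split_ifs <;> simp)
  have part1 : ∫ θ, Err θ ∂μ = ∑ k : Fin K, c k * T k := by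
    have hS : MeasurableSet {p : Θ × Ω | h (p.1, X p.2) = Y p.2} :=
      measurableSet_eq_fun (hmeas.comp (measurable_fst.prodMk (hX.comp measurable_snd)))
        (hY.comp measurable_snd)
    have e1 : ∀ θ, Err θ = ∫ ω, (if h (θ, X ω) = Y ω then (0 : ℝ) else 1) ∂ν := by
      intro θ
      have hs : MeasurableSet {ω | h (θ, X ω) ≠ Y ω} :=
        (measurable_prodMk_left hS : MeasurableSet {ω | h (θ, X ω) = Y ω}).compl
      rw [Err_def, ← measureReal_def, ← integral_indicator_one hs]
      congr 1
      funext ω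
      by_cases hh : h (θ, X ω) = Y ω <;> simp [hh]
    simp_rw [e1]
    rw [integral_integral_swap]
    · have e2 : ∀ ω, ∫ θ, (if h (θ, X ω) = Y ω then (0 : ℝ) else 1) ∂μ
          = ∑ k, (if Y ω = k then (1 : ℝ) else 0) * (1 - htilde k (X ω)) := by
        intro ω
        simp_rw [sumind]
        rw [integral_finsetSum]
        · refine Finset.sum_congr rfl fun k _ => ?_
          rw [integral_const_mul, integral_sub (integrable_const _) (hEm k _), Hint]
          simp
        · intro k _
          exact ((integrable_const _).sub (hEm k _)).const_mul _
      simp_rw [e2]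
      rw [integral_finsetSum]
      · exact Finset.sum_congr rfl fun k _ => cal k
      · intro k _
        have hYm : Measurable fun ω => if Y ω = k then (1 : ℝ) else 0 :=
          Measurable.ite (hY (measurableSet_singleton k)) measurable_const measurable_const
        exact Integrable.of_bound (hYm.mul (measurable_const.sub (HXm k))).aestronglyMeasurable 1
          (Filter.Eventually.of_forall fun ω => by
            have a := H0 k (X ω)
            have b := H1 k (X ω)
            rw [Real.norm_eq_abs, abs_le]; split_ifs <;> constructor <;> linarith)
    · exact Integrable.of_bound (Measurable.ite hS measurable_const
        measurable_const).aestronglyMeasurable 1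
        (Filter.Eventually.of_forall fun p => by
          simp only [Function.uncurry]; split_ifs <;> simp)
  refine ⟨part1, fun b N hN => ?_⟩
  have part2 : ∫ θs, PDD N θs ∂(Measure.pi fun _ : Fin (N + 1) => μ) = ∑ k, T k := by
    have hN0 : (N : ℝ) ≠ 0 := by positivity
    simp_rw [PDD_def]
    have hjm : ∀ j : Fin (N + 1),
        Measurable fun p : (Fin (N + 1) → Θ) × Ω => h (p.1 j, X p.2) := fun j =>
      hmeas.comp (((measurable_pi_apply j).comp measurable_fst).prodMk (hX.comp measurable_snd))
    have hterm : ∀ i : Fin N, Integrable (fun p : (Fin (N + 1) → Θ) × Ω =>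
        if h (p.1 0, X p.2) = h (p.1 i.succ, X p.2) then (0 : ℝ) else 1)
        ((Measure.pi fun _ : Fin (N + 1) => μ).prod ν) := fun i =>
      Integrable.of_bound (Measurable.ite (measurableSet_eq_fun (hjm 0) (hjm i.succ))
        measurable_const measurable_const).aestronglyMeasurable 1
        (Filter.Eventually.of_forall fun p => by split_ifs <;> simp)
    rw [integral_integral_swap]
    · have hkm : ∀ (j : Fin (N + 1)) k x, Measurable fun θs : Fin (N + 1) → Θ =>
          if h (θs j, x) = k then (1 : ℝ) else 0 := fun j k x =>
        Measurable.ite (show MeasurableSet ((fun θs : Fin (N + 1) → Θ => θs j) ⁻¹' {θ | h (θ, x) = k})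
          from (measurable_pi_apply j) (hsec k x)) measurable_const measurable_const
      have e3 : ∀ (x : 𝒳) (i : Fin N),
          ∫ θs, (if h (θs 0, x) = h (θs i.succ, x) then (0 : ℝ) else 1)
            ∂(Measure.pi fun _ : Fin (N + 1) => μ) = ∑ k, htilde k x * (1 - htilde k x) := by
        intro x i
        simp_rw [sumind]
        rw [integral_finsetSum]
        · refine Finset.sum_congr rfl fun k _ => ?_
          have := aux_pi_pair μ N i (fun θ => 1 - if h (θ, x) = k then (1 : ℝ) else 0)
            (fun θ => if h (θ, x) = k then (1 : ℝ) else 0)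
          simp_rw [mul_comm (ite _ _ _)]
          rw [this, integral_sub (integrable_const _) (hEm k _), Hint]
          simp [mul_comm]
        · intro k _
          exact Integrable.of_bound ((hkm _ k x).mul
            (measurable_const.sub (hkm _ k x))).aestronglyMeasurable 1
            (Filter.Eventually.of_forall fun p => by split_ifs <;> simp)
      have e4 : ∀ ω, ∫ θs, (1 / (N : ℝ)) *
          ∑ i : Fin N, (if h (θs 0, X ω) = h (θs i.succ, X ω) then (0 : ℝ) else 1)
            ∂(Measure.pi fun _ : Fin (N + 1) => μ)
          = ∑ k, htilde k (X ω) * (1 - htilde k (X ω)) := by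
        intro ω
        rw [integral_const_mul, integral_finsetSum]
        · simp_rw [e3]
          simp only [Finset.sum_const, Finset.card_univ, Fintype.card_fin, nsmul_eq_mul]
          field_simp
        · intro i _
          have hj : ∀ j : Fin (N + 1), Measurable fun θs : Fin (N + 1) → Θ => h (θs j, X ω) :=
            fun j => hmeas.comp ((measurable_pi_apply j).prodMk measurable_const)
          exact Integrable.of_bound (Measurable.ite (measurableSet_eq_fun (hj 0) (hj i.succ))
            measurable_const measurable_const).aestronglyMeasurable 1
            (Filter.Eventually.of_forall fun p => by split_ifs <;> simp)
      simp_rw [e4]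
      rw [integral_finsetSum _ fun k _ => TI k]
      simp_rw [T_def]
    · exact (integrable_finsetSum _ fun i _ => hterm i).const_mul _
  rw [part1, part2, Finset.mul_sum, ← Finset.sum_sub_distrib]
  exact Finset.sum_congr rfl fun k _ => by ring
end
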